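/- arXiv:1810.13000 — 5 statements merged into one kernel-verified Lean document; each statement's English description precedes it below -/
import Mathlib

section
/- Let λ = (λ_1,…,λ_r) be a composition of n with r ≥ 2, and let t ∈ {1,…,r} satisfy s_t = 0. Then the number of orbits of T_λ equals λ_t plus the number of orbits of T_{λ'}, where λ' = (λ_1,…,λ_{t−1},λ_{t+1},…,λ_r) is the composition obtained from λ by deleting its t-th part; that is, γ(T_λ) = λ_t + γ(T_{λ'}). -/
/-!
Write `λ = p ++ c :: q`, where `c` is the deleted part; `s_t = 0` says that `p` and `q` have the
same sum `m`. Then `T_λ` fixes every point of the middle block `(m, m + c]` and, like `T_{p ++ q}`,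
interchanges the points before the middle with the points after it. Opening a gap of length `c`
after `m` therefore intertwines `T_{p ++ q}` with `T_λ`, so the orbits of `T_λ` are the `c`
singletons in the gap together with the images of the orbits of `T_{p ++ q}`.
-/

/-- A composition: a nonempty list of positive integers. -/
def IsComposition (l : List ℕ) : Prop := l ≠ [] ∧ ∀ x ∈ l, 0 < x

/-- The `i`-th translation parameter (0-indexed):
`s_i = (sum of parts after position i) - (sum of parts before position i)`. -/
def transParam (l : List ℕ) (i : ℕ) : ℤ :=
  ((l.drop (i + 1)).sum : ℤ) - ((l.take i).sum : ℤ)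

/-- The symmetric discrete interval exchange associated to `l`, as a map `ℤ → ℤ`
(acting on `{1, …, n}`, identity elsewhere): `x ∈ B_i` is sent to `x + s_i`. -/
def Texch (l : List ℕ) (x : ℤ) : ℤ :=
  x + ∑ i ∈ Finset.range l.length,
    (if ((l.take i).sum : ℤ) < x ∧ x ≤ ((l.take (i + 1)).sum : ℤ) then transParam l i else 0)

/-- The orbit of `x` under `T_l`. -/
def orbit (l : List ℕ) (x : ℤ) : Set ℤ := {y | ∃ k : ℕ, (Texch l)^[k] x = y}

/-- The set of orbits of `T_l` on `{1, …, n}`. -/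
def orbitsSet (l : List ℕ) : Set (Set ℤ) :=
  {S | ∃ x : ℤ, 1 ≤ x ∧ x ≤ (l.sum : ℤ) ∧ S = orbit l x}

/-- The number of orbits `γ(T_l)` of `T_l` on `{1, …, n}`. -/
noncomputable def numOrbits (l : List ℕ) : ℕ := (orbitsSet l).ncard

section Blocks

variable {l : List ℕ} {i : ℕ} {x : ℤ}

/-- The block `B_i` (0-indexed) of the composition `l`, as a set of integers; it is empty if
`l.length ≤ i`. -/
def block (l : List ℕ) (i : ℕ) : Set ℤ :=
  Set.Ioc ((l.take i).sum : ℤ) ((l.take (i + 1)).sum : ℤ)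

theorem monotone_intCast_sum_take (l : List ℕ) : Monotone fun i ↦ ((l.take i).sum : ℤ) :=
  Nat.mono_cast.comp l.monotone_sum_take

theorem pairwise_disjoint_block (l : List ℕ) :
    Pairwise (Function.onFun Disjoint (block l)) :=
  (monotone_intCast_sum_take l).pairwise_disjoint_on_Ioc_succ

theorem biUnion_block (l : List ℕ) :
    ⋃ i ∈ Set.Ico 0 l.length, block l i = Set.Ioc 0 (l.sum : ℤ) := by
  have h := (monotone_intCast_sum_take l).biUnion_Ico_Ioc_map_succ 0 l.length
  rwa [List.take_zero, List.sum_nil, Nat.cast_zero, List.take_length] at h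

theorem exists_mem_block (hx : x ∈ Set.Ioc 0 (l.sum : ℤ)) : ∃ i < l.length, x ∈ block l i := by
  rw [← biUnion_block] at hx
  obtain ⟨i, hi, hxi⟩ := Set.mem_iUnion₂.1 hx
  exact ⟨i, hi.2, hxi⟩

theorem texch_of_mem_block (hi : i < l.length) (hx : x ∈ block l i) :
    Texch l x = x + transParam l i := by
  rw [Texch, Finset.sum_eq_single_of_mem i (Finset.mem_range.2 hi)]
  · exact congrArg (x + ·) (if_pos hx)
  · intro j _ hji
    exact if_neg fun hxj ↦ Set.disjoint_left.1 (pairwise_disjoint_block l hji) hxj hx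

theorem texch_of_notMem_Ioc (hx : x ∉ Set.Ioc 0 (l.sum : ℤ)) : Texch l x = x := by
  rw [Texch, Finset.sum_eq_zero, add_zero]
  intro i hi
  refine if_neg fun hxi ↦ hx ?_
  rw [← biUnion_block]
  exact Set.mem_biUnion ⟨Nat.zero_le i, Finset.mem_range.1 hi⟩ hxi

theorem texch_mem_Ioc (hx : x ∈ Set.Ioc 0 (l.sum : ℤ)) : Texch l x ∈ Set.Ioc 0 (l.sum : ℤ) := by
  obtain ⟨i, hi, hxi⟩ := exists_mem_block hx
  rw [texch_of_mem_block hi hxi, transParam]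
  have hsum := l.sum_take_add_sum_drop (i + 1)
  simp only [block, Set.mem_Ioc] at hxi ⊢
  omega

theorem texch_singleton (c : ℕ) (x : ℤ) : Texch [c] x = x := by
  simp [Texch, transParam]

end Blocks

section Append

variable {p q : List ℕ} {i : ℕ} {x : ℤ}

theorem block_append_left (hi : i < p.length) : block (p ++ q) i = block p i := by
  rw [block, block, List.take_append_of_le_length hi.le, List.take_append_of_le_length hi]

theorem mem_block_append_right :
    x ∈ block (p ++ q) (p.length + i) ↔ x - p.sum ∈ block q i := by
  simp only [block, add_assoc, List.take_length_add_append, List.sum_append, Nat.cast_add,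
    Set.mem_Ioc, lt_sub_iff_add_lt', sub_le_iff_le_add']

theorem transParam_append_left (hi : i < p.length) :
    transParam (p ++ q) i = transParam p i + q.sum := by
  rw [transParam, transParam, List.take_append_of_le_length hi.le,
    List.drop_append_of_le_length hi, List.sum_append, Nat.cast_add]
  ring

theorem transParam_append_right :
    transParam (p ++ q) (p.length + i) = transParam q i - p.sum := by
  simp only [transParam, add_assoc, List.take_length_add_append, List.drop_length_add_append,
    List.sum_append, Nat.cast_add]
  ring

theorem texch_append_left (hx : x ∈ Set.Ioc 0 (p.sum : ℤ)) :
    Texch (p ++ q) x = Texch p x + q.sum := by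
  obtain ⟨i, hi, hxi⟩ := exists_mem_block hx
  have hi' : i < (p ++ q).length := by rw [List.length_append]; omega
  rw [texch_of_mem_block hi' (block_append_left hi ▸ hxi), texch_of_mem_block hi hxi,
    transParam_append_left hi, add_assoc]

theorem texch_append_right (hx : x - p.sum ∈ Set.Ioc 0 (q.sum : ℤ)) :
    Texch (p ++ q) x = Texch q (x - p.sum) := by
  obtain ⟨i, hi, hxi⟩ := exists_mem_block hx
  have hi' : p.length + i < (p ++ q).length := by rw [List.length_append]; omega
  rw [texch_of_mem_block hi' (mem_block_append_right.2 hxi), texch_of_mem_block hi hxi,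
    transParam_append_right]
  ring

end Append

section Gap

variable {m : ℤ} {c : ℕ}

/-- The injection `ℤ → ℤ` that opens a gap of length `c` after `m`: its range is the complement of
`(m, m + c]`. -/
def openGap (m : ℤ) (c : ℕ) (x : ℤ) : ℤ := if x ≤ m then x else x + c

theorem openGap_of_le {x : ℤ} (hx : x ≤ m) : openGap m c x = x := if_pos hx

theorem openGap_of_lt {x : ℤ} (hx : m < x) : openGap m c x = x + c := if_neg hx.not_ge

theorem openGap_injective (m : ℤ) (c : ℕ) : Function.Injective (openGap m c) := by
  intro x y hxy
  unfold openGap at hxy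
  split_ifs at hxy <;> omega

theorem range_openGap (m : ℤ) (c : ℕ) : Set.range (openGap m c) = (Set.Ioc m (m + c))ᶜ := by
  ext x
  simp only [Set.mem_range, Set.mem_compl_iff, Set.mem_Ioc]
  constructor
  · rintro ⟨y, rfl⟩
    unfold openGap
    split_ifs <;> omega
  · intro hx
    rcases le_or_gt x m with hxm | hmx
    · exact ⟨x, openGap_of_le hxm⟩
    · exact ⟨x - c, by rw [openGap_of_lt (by omega), sub_add_cancel]⟩

theorem openGap_mem_Ioc_iff {n x : ℤ} (hm : 0 ≤ m) (hmn : m ≤ n) :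
    openGap m c x ∈ Set.Ioc 0 (n + c) ↔ x ∈ Set.Ioc 0 n := by
  simp only [openGap, Set.mem_Ioc]
  split_ifs <;> omega

theorem Ioc_union_image_openGap {n : ℤ} (hm : 0 ≤ m) (hmn : m ≤ n) :
    Set.Ioc m (m + c) ∪ openGap m c '' Set.Ioc 0 n = Set.Ioc 0 (n + c) := by
  have hpreimage : openGap m c ⁻¹' Set.Ioc 0 (n + c) = Set.Ioc 0 n :=
    Set.ext fun _ ↦ openGap_mem_Ioc_iff hm hmn
  rw [← hpreimage, Set.image_preimage_eq_inter_range, range_openGap, ← Set.sdiff_eq,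
    Set.union_sdiff_cancel (Set.Ioc_subset_Ioc hm (by omega))]

theorem disjoint_singleton_image_image_openGap (m : ℤ) (c : ℕ)
    (A : Set (Set ℤ)) :
    Disjoint (singleton '' Set.Ioc m (m + c)) (Set.image (openGap m c) '' A) := by
  rw [Set.disjoint_left]
  rintro _ ⟨x, hx, rfl⟩ ⟨S, -, hS⟩
  have hrange : x ∈ Set.range (openGap m c) :=
    Set.image_subset_range _ S (hS ▸ Set.mem_singleton x)
  rw [range_openGap] at hrange
  exact hrange hx

end Gap

section Middle

variable {p q : List ℕ} (c : ℕ)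

theorem sum_append_cons (p q : List ℕ) : (p ++ c :: q).sum = (p ++ q).sum + c := by
  simp only [List.sum_append, List.sum_cons]
  omega

theorem texch_append_cons_middle (hpq : p.sum = q.sum) {x : ℤ}
    (hx : x ∈ Set.Ioc (p.sum : ℤ) (p.sum + c)) : Texch (p ++ c :: q) x = x := by
  obtain ⟨hpx, hxc⟩ := hx
  have hmiddle : x - p.sum ∈ Set.Ioc 0 ([c].sum : ℤ) := by
    rw [List.sum_singleton]
    exact ⟨by omega, by omega⟩
  have hright : x - p.sum ∈ Set.Ioc 0 (([c] ++ q).sum : ℤ) := by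
    rw [List.sum_append, Nat.cast_add]
    exact ⟨hmiddle.1, by linarith [hmiddle.2]⟩
  calc Texch (p ++ ([c] ++ q)) x
      = Texch ([c] ++ q) (x - p.sum) := texch_append_right hright
    _ = Texch [c] (x - p.sum) + q.sum := texch_append_left hmiddle
    _ = x := by rw [texch_singleton, hpq, sub_add_cancel]

theorem texch_append_cons_openGap_left (hpq : p.sum = q.sum) {x : ℤ}
    (hx : x ∈ Set.Ioc 0 (p.sum : ℤ)) :
    Texch (p ++ c :: q) (openGap p.sum c x) = openGap p.sum c (Texch (p ++ q) x) := by
  have hpos : 0 < Texch p x := (texch_mem_Ioc hx).1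
  rw [openGap_of_le hx.2, texch_append_left hx, texch_append_left hx, openGap_of_lt (by omega),
    List.sum_cons, Nat.cast_add]
  ring

theorem texch_append_cons_openGap_right (hpq : p.sum = q.sum) {x : ℤ}
    (hx : x - p.sum ∈ Set.Ioc 0 (q.sum : ℤ)) :
    Texch (p ++ c :: q) (openGap p.sum c x) = openGap p.sum c (Texch (p ++ q) x) := by
  have hle : Texch q (x - p.sum) ≤ q.sum := (texch_mem_Ioc hx).2
  have hshift : x + c - (p ++ [c]).sum = x - p.sum := by
    rw [List.sum_append, List.sum_singleton, Nat.cast_add]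
    ring
  calc Texch (p ++ c :: q) (openGap p.sum c x)
      = Texch ((p ++ [c]) ++ q) (x + c) := by
        rw [openGap_of_lt (sub_pos.1 hx.1), List.append_cons]
    _ = Texch q (x - p.sum) := by rw [texch_append_right (hshift ▸ hx), hshift]
    _ = openGap p.sum c (Texch (p ++ q) x) := by
        rw [texch_append_right hx, openGap_of_le (by omega)]

theorem semiconj_openGap_texch (hpq : p.sum = q.sum) :
    Function.Semiconj (openGap p.sum c) (Texch (p ++ q)) (Texch (p ++ c :: q)) := by
  intro x
  by_cases hx : x ∈ Set.Ioc 0 ((p ++ q).sum : ℤ)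
  · rw [List.sum_append, Nat.cast_add] at hx
    rcases le_or_gt x p.sum with hxp | hpx
    · exact (texch_append_cons_openGap_left c hpq ⟨hx.1, hxp⟩).symm
    · exact (texch_append_cons_openGap_right c hpq
        ⟨sub_pos.2 hpx, sub_le_iff_le_add'.2 hx.2⟩).symm
  · have hgap : openGap p.sum c x ∉ Set.Ioc 0 ((p ++ c :: q).sum : ℤ) := by
      rwa [sum_append_cons, Nat.cast_add, openGap_mem_Ioc_iff (by omega)
        (by rw [List.sum_append]; omega)]
    rw [texch_of_notMem_Ioc hx, texch_of_notMem_Ioc hgap]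

end Middle

section Orbits

variable {l l' : List ℕ}

theorem orbit_of_texch_eq_self {x : ℤ} (hx : Texch l x = x) : orbit l x = {x} := by
  simp only [orbit, Function.iterate_fixed hx, exists_const]
  exact Set.ofPred_eq_eq_singleton'

theorem orbit_apply_of_semiconj {φ : ℤ → ℤ} (hφ : Function.Semiconj φ (Texch l) (Texch l'))
    (x : ℤ) : orbit l' (φ x) = φ '' orbit l x := by
  have hiterate : ∀ k, (Texch l')^[k] (φ x) = φ ((Texch l)^[k] x) := fun k ↦
    ((hφ.iterate_right k).eq x).symm
  calc orbit l' (φ x) = Set.range fun k ↦ φ ((Texch l)^[k] x) := by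
        simp only [orbit, hiterate, Set.range]
    _ = φ '' orbit l x := Set.range_comp φ _

theorem orbitsSet_eq_image_orbit (l : List ℕ) :
    orbitsSet l = orbit l '' Set.Ioc 0 (l.sum : ℤ) := by
  ext S
  simp only [orbitsSet, Set.mem_ofPred_eq, Set.mem_image, Set.mem_Ioc, and_assoc,
    ← Int.add_one_le_iff (a := 0), zero_add, eq_comm]

theorem finite_orbitsSet (l : List ℕ) : (orbitsSet l).Finite := by
  rw [orbitsSet_eq_image_orbit]
  exact (Set.finite_Ioc _ _).image _

variable {p q : List ℕ} (c : ℕ)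

theorem orbitsSet_append_cons (hpq : p.sum = q.sum) :
    orbitsSet (p ++ c :: q) =
      singleton '' Set.Ioc (p.sum : ℤ) (p.sum + c) ∪
        Set.image (openGap p.sum c) '' orbitsSet (p ++ q) := by
  have hdomain : Set.Ioc 0 ((p ++ c :: q).sum : ℤ) =
      Set.Ioc (p.sum : ℤ) (p.sum + c) ∪ openGap p.sum c '' Set.Ioc 0 ((p ++ q).sum : ℤ) := by
    rw [sum_append_cons, Nat.cast_add, Ioc_union_image_openGap (by omega)
      (by rw [List.sum_append]; omega)]
  rw [orbitsSet_eq_image_orbit, orbitsSet_eq_image_orbit, hdomain, Set.image_union,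
    Set.image_image, Set.image_image]
  congr 1
  · exact Set.image_congr fun x hx ↦ orbit_of_texch_eq_self (texch_append_cons_middle c hpq hx)
  · exact Set.image_congr fun x _ ↦ orbit_apply_of_semiconj (semiconj_openGap_texch c hpq) x

theorem numOrbits_append_cons (hpq : p.sum = q.sum) :
    numOrbits (p ++ c :: q) = c + numOrbits (p ++ q) := by
  have hgap : (Set.Ioc (p.sum : ℤ) (p.sum + c)).ncard = c := by
    rw [← Finset.coe_Ioc, Set.ncard_coe_finset, Int.card_Ioc, add_sub_cancel_left,
      Int.toNat_natCast]
  rw [numOrbits, numOrbits, orbitsSet_append_cons c hpq,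
    Set.ncard_union_eq (disjoint_singleton_image_image_openGap _ c _)
      ((Set.finite_Ioc _ _).image _) ((finite_orbitsSet _).image _),
    Set.ncard_image_of_injective _ Set.singleton_injective,
    Set.ncard_image_of_injective _ (openGap_injective _ _).image_injective, hgap]

end Orbits

/-- Lemma 3.2: if `s_t = 0`, then
`γ(T_λ) = λ_t + γ(T_{λ'})` where `λ'` is `λ` with its `t`-th part deleted. -/
theorem numOrbits_eq_add_of_transParam_eq_zero (l : List ℕ) (hl : IsComposition l)
    (hr : 2 ≤ l.length) (t : ℕ) (ht : t < l.length) (hs : transParam l t = 0) :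
    numOrbits l = l.getD t 0 + numOrbits (l.eraseIdx t) := by
  have hsum : (l.take t).sum = (l.drop (t + 1)).sum := by
    rw [transParam, sub_eq_zero] at hs
    exact_mod_cast hs.symm
  calc numOrbits l
      = numOrbits (l.take t ++ l[t] :: l.drop (t + 1)) := by
        rw [← List.drop_eq_getElem_cons ht, List.take_append_drop]
    _ = l[t] + numOrbits (l.take t ++ l.drop (t + 1)) := numOrbits_append_cons l[t] hsum
    _ = l.getD t 0 + numOrbits (l.eraseIdx t) := by
        rw [List.getD_eq_getElem _ _ ht, List.eraseIdx_eq_take_drop_succ]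
end

section
/- Let λ = (λ_1,…,λ_r) be a composition of n and let t ∈ {1,…,r}. Then the permutations T_{(λ_1,…,λ_r)} and T_{(λ_1,…,λ_{t−1}, λ_t + |s_t|, λ_{t+1},…,λ_r)} have the same number of orbits, where s_t is the t-th translation parameter of λ. -/
/-!
Let `s = s_t ≥ 0`. Enlarging `λ_t` to `λ_t + s` leaves `s_t` unchanged, so the new exchange `T'`
translates by `s` the interval `J` formed by the first `s` points of the enlarged block, and in
particular moves `J` off itself. Up to the increasing relabelling that skips `J`, the old exchange
`T` is the first return map of `T'` to the complement of `J`. Since every orbit of `T'` leaves `J`,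
each orbit of `T` is the trace of exactly one orbit of `T'`. The case `s_t < 0` follows by
reversing `λ`: this replaces `T_λ` by its inverse and negates the translation parameters.
-/

section FirstReturn

open Function Set

variable {α β : Type*}

/-- The forward orbit of `x` under `f`; for `f = Texch l` it is `orbit l x`. -/
def iterOrbit (f : α → α) (x : α) : Set α := range fun k : ℕ => f^[k] x

lemma iterate_mem_iterOrbit (f : α → α) (k : ℕ) (x : α) : f^[k] x ∈ iterOrbit f x := ⟨k, rfl⟩

lemma self_mem_iterOrbit (f : α → α) (x : α) : x ∈ iterOrbit f x := ⟨0, rfl⟩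

lemma iterOrbit_subset_of_mem {f : α → α} {x y : α} (h : y ∈ iterOrbit f x) :
    iterOrbit f y ⊆ iterOrbit f x := by
  obtain ⟨k, rfl⟩ := h
  rintro _ ⟨j, rfl⟩
  exact ⟨j + k, iterate_add_apply f j k x⟩

lemma iterOrbit_eq_of_mem {f : α → α} {x y : α} (hx : x ∈ periodicPts f)
    (h : y ∈ iterOrbit f x) : iterOrbit f y = iterOrbit f x := by
  refine (iterOrbit_subset_of_mem h).antisymm (iterOrbit_subset_of_mem ?_)
  obtain ⟨k, rfl⟩ := h
  obtain ⟨n, hn, hper⟩ := mem_periodicPts.1 hx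
  refine ⟨n * k - k, ?_⟩
  calc f^[n * k - k] (f^[k] x) = f^[n * k] x := by
        rw [← iterate_add_apply, Nat.sub_add_cancel (Nat.le_mul_of_pos_left k hn)]
    _ = x := hper.mul_const k

lemma iterOrbit_subset_of_leftInvOn {f g : α → α} {A : Set α} (hmaps : MapsTo f A A)
    (hinv : LeftInvOn g f A) (hper : A ⊆ periodicPts g) {x : α} (hx : x ∈ A) :
    iterOrbit f x ⊆ iterOrbit g x := by
  rintro _ ⟨k, rfl⟩
  induction k generalizing x with
  | zero => exact self_mem_iterOrbit g x
  | succ k ih =>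
    have hback : x ∈ iterOrbit g (f x) := ⟨1, hinv hx⟩
    rw [iterOrbit_eq_of_mem (hper (hmaps hx)) hback]
    exact ih (hmaps hx)

lemma subset_periodicPts_of_injOn {f : α → α} {A : Set α} (hA : A.Finite) (hmaps : MapsTo f A A)
    (hinj : InjOn f A) : A ⊆ periodicPts f := by
  intro x hx
  have : Finite A := hA
  obtain ⟨n, hn, hper⟩ := (hmaps.restrict_inj.2 hinj).mem_periodicPts ⟨x, hx⟩
  exact mk_mem_periodicPts hn (hper.map (g := Subtype.val) fun _ => rfl)

/-- `f` restricted to `A` is, through the relabelling `ψ`, the first return map of `g` to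
`ψ '' A`. The return time of `ψ x` is `n + 1`. -/
structure IsFirstReturnMap (f : α → α) (g : β → β) (ψ : α → β) (A : Set α) : Prop where
  mapsTo : MapsTo f A A
  injOn : InjOn ψ A
  exists_return : ∀ x ∈ A, ∃ n, g^[n + 1] (ψ x) = ψ (f x) ∧ ∀ k < n, g^[k + 1] (ψ x) ∉ ψ '' A

namespace IsFirstReturnMap

variable {f : α → α} {g : β → β} {ψ : α → β} {A : Set α} {x : α}

lemma map_mem_iterOrbit (h : IsFirstReturnMap f g ψ A) (hx : x ∈ A) {y : α}
    (hy : y ∈ iterOrbit f x) : ψ y ∈ iterOrbit g (ψ x) := by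
  obtain ⟨k, rfl⟩ := hy
  induction k generalizing x with
  | zero => exact self_mem_iterOrbit g (ψ x)
  | succ k ih =>
    obtain ⟨n, hn, -⟩ := h.exists_return x hx
    have hfx : ψ (f x) ∈ iterOrbit g (ψ x) := hn ▸ iterate_mem_iterOrbit g (n + 1) (ψ x)
    exact iterOrbit_subset_of_mem hfx (ih (h.mapsTo hx))

lemma mem_iterOrbit_of_map_mem (h : IsFirstReturnMap f g ψ A) (hx : x ∈ A) {y : α} (hy : y ∈ A)
    (hxy : ψ y ∈ iterOrbit g (ψ x)) : y ∈ iterOrbit f x := by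
  obtain ⟨k, hk⟩ := hxy
  induction k using Nat.strong_induction_on generalizing x with
  | _ k ih =>
    rcases k with _ | k
    · exact h.injOn hx hy hk ▸ self_mem_iterOrbit f x
    · obtain ⟨n, hn, hfirst⟩ := h.exists_return x hx
      have hnk : n ≤ k := not_lt.1 fun hlt => hfirst k hlt ⟨y, hy, hk.symm⟩
      have hrest : g^[k - n] (ψ (f x)) = ψ y := by
        rw [← hn, ← iterate_add_apply, show k - n + (n + 1) = k + 1 by omega]
        exact hk
      exact iterOrbit_subset_of_mem (iterate_mem_iterOrbit f 1 x)
        (ih (k - n) (by omega) (h.mapsTo hx) hrest)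

lemma iterOrbit_eq_inter_preimage (h : IsFirstReturnMap f g ψ A) (hx : x ∈ A) :
    iterOrbit f x = A ∩ ψ ⁻¹' iterOrbit g (ψ x) := by
  refine Subset.antisymm (fun y hy => ⟨?_, h.map_mem_iterOrbit hx hy⟩)
    fun y hy => h.mem_iterOrbit_of_map_mem hx hy.1 hy.2
  obtain ⟨k, rfl⟩ := hy
  exact h.mapsTo.iterate k hx

theorem ncard_image_iterOrbit_eq (h : IsFirstReturnMap f g ψ A) {B : Set β} (hAB : MapsTo ψ A B)
    (hB : B ⊆ periodicPts g) (hvisit : ∀ y ∈ B, ∃ k, g^[k] y ∈ ψ '' A) :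
    (iterOrbit g '' B).ncard = (iterOrbit f '' A).ncard := by
  have hrep : iterOrbit g '' B = (fun x => iterOrbit g (ψ x)) '' A := by
    apply Subset.antisymm
    · rintro _ ⟨y, hy, rfl⟩
      obtain ⟨k, x, hx, hxk⟩ := hvisit y hy
      exact ⟨x, hx, iterOrbit_eq_of_mem (hB hy) (hxk ▸ iterate_mem_iterOrbit g k y)⟩
    · rintro _ ⟨x, hx, rfl⟩
      exact ⟨ψ x, hAB hx, rfl⟩
  have htrace : iterOrbit f '' A = (fun S => A ∩ ψ ⁻¹' S) '' (iterOrbit g '' B) := by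
    rw [hrep, image_image]
    exact image_congr fun x hx => h.iterOrbit_eq_inter_preimage hx
  have hinj : InjOn (fun S => A ∩ ψ ⁻¹' S) (iterOrbit g '' B) := by
    rw [hrep]
    rintro _ ⟨x, hx, rfl⟩ _ ⟨x', hx', rfl⟩ heq
    have hmem : x ∈ A ∩ ψ ⁻¹' iterOrbit g (ψ x') :=
      heq.subset ⟨hx, self_mem_iterOrbit g (ψ x)⟩
    exact iterOrbit_eq_of_mem (hB (hAB hx')) hmem.2
  rw [htrace, hinj.ncard_image]

end IsFirstReturnMap

end FirstReturn

section Exchange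

open Function Set

lemma Texch_of_mem_Ioc_sum_take {l : List ℕ} {i : ℕ} (hi : i < l.length) {x : ℤ}
    (hx : x ∈ Ioc ((l.take i).sum : ℤ) (l.take (i + 1)).sum) :
    Texch l x = x + transParam l i := by
  have hmono : Monotone fun j => ((l.take j).sum : ℤ) := fun _ _ hjk =>
    Nat.cast_le.2 <| (List.take_prefix_take_left hjk).sublist.sum_le_sum fun _ _ => Nat.zero_le _
  have hother : ∀ j, j ≠ i → ¬(((l.take j).sum : ℤ) < x ∧ x ≤ (l.take (j + 1)).sum) :=
    fun j hj hjx => (hmono.pairwise_disjoint_on_Ioc_succ hj).le_bot ⟨hjx, hx⟩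
  unfold Texch
  rw [Finset.sum_eq_single_of_mem i (Finset.mem_range.2 hi) fun j _ hj => if_neg (hother j hj),
    if_pos (mem_Ioc.1 hx)]

lemma Texch_append_cons {p q : List ℕ} {b : ℕ} {x : ℤ}
    (hx : x ∈ Ioc (p.sum : ℤ) (p.sum + b)) :
    Texch (p ++ b :: q) x = x + (q.sum - p.sum) := by
  have hleft : (p ++ b :: q).take p.length = p := List.take_append_length
  have hright : (p ++ b :: q).take (p.length + 1) = p ++ [b] := List.take_length_add_append 1
  have hdrop : (p ++ b :: q).drop (p.length + 1) = q := List.drop_length_add_append 1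
  rw [Texch_of_mem_Ioc_sum_take (i := p.length) (by simp), transParam, hleft, hdrop]
  rwa [hleft, hright, List.sum_append, List.sum_singleton, Nat.cast_add]

lemma exists_eq_append_cons_of_mem_Ioc {l : List ℕ} {x : ℤ} (hx : x ∈ Ioc (0 : ℤ) l.sum) :
    ∃ (p : List ℕ) (b : ℕ) (q : List ℕ), l = p ++ b :: q ∧ x ∈ Ioc (p.sum : ℤ) (p.sum + b) := by
  induction l generalizing x with
  | nil => exact absurd (hx.1.trans_le hx.2) (lt_irrefl 0)
  | cons c l ih =>
    rw [List.sum_cons, Nat.cast_add] at hx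
    obtain ⟨hpos, hle⟩ := hx
    by_cases hxc : x ≤ c
    · exact ⟨[], c, l, rfl, by simpa using ⟨hpos, hxc⟩⟩
    · obtain ⟨p, b, q, rfl, hgt, hle⟩ := ih (x := x - c) ⟨by omega, by omega⟩
      refine ⟨c :: p, b, q, rfl, ?_⟩
      rw [List.sum_cons, Nat.cast_add]
      exact ⟨by omega, by omega⟩

lemma cast_sum_append_cons (p q : List ℕ) (b : ℕ) :
    ((p ++ b :: q).sum : ℤ) = p.sum + b + q.sum := by
  rw [List.sum_append, List.sum_cons, Nat.cast_add, Nat.cast_add, add_assoc]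

lemma mapsTo_Texch (l : List ℕ) : MapsTo (Texch l) (Ioc 0 (l.sum : ℤ)) (Ioc 0 (l.sum : ℤ)) := by
  intro x hx
  obtain ⟨p, b, q, rfl, hxb⟩ := exists_eq_append_cons_of_mem_Ioc hx
  rw [Texch_append_cons hxb, cast_sum_append_cons]
  obtain ⟨hgt, hle⟩ := hxb
  exact ⟨by omega, by omega⟩

lemma leftInvOn_Texch_reverse (l : List ℕ) :
    LeftInvOn (Texch l.reverse) (Texch l) (Ioc 0 (l.sum : ℤ)) := by
  intro x hx
  obtain ⟨p, b, q, rfl, hxb⟩ := exists_eq_append_cons_of_mem_Ioc hx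
  have hrev : (p ++ b :: q).reverse = q.reverse ++ b :: p.reverse := by simp
  rw [Texch_append_cons hxb, hrev, Texch_append_cons]
  · rw [List.sum_reverse, List.sum_reverse]
    ring
  · rw [List.sum_reverse]
    obtain ⟨hgt, hle⟩ := hxb
    exact ⟨by omega, by omega⟩

lemma Ioc_subset_periodicPts_Texch (l : List ℕ) :
    Ioc 0 (l.sum : ℤ) ⊆ periodicPts (Texch l) :=
  subset_periodicPts_of_injOn (finite_Ioc _ _) (mapsTo_Texch l) (leftInvOn_Texch_reverse l).injOn

lemma Texch_append_left {p : List ℕ} (m : List ℕ) {x : ℤ} (hx : x ∈ Ioc (0 : ℤ) p.sum) :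
    Texch (p ++ m) x = Texch p x + m.sum := by
  obtain ⟨p₁, b, p₂, rfl, hxb⟩ := exists_eq_append_cons_of_mem_Ioc hx
  rw [Texch_append_cons hxb, List.append_assoc, List.cons_append, Texch_append_cons hxb,
    List.sum_append, Nat.cast_add]
  ring

lemma Texch_append_right (p : List ℕ) {m : List ℕ} {x : ℤ} (hx : x ∈ Ioc (0 : ℤ) m.sum) :
    Texch (p ++ m) (p.sum + x) = Texch m x := by
  obtain ⟨m₁, b, m₂, rfl, hxb⟩ := exists_eq_append_cons_of_mem_Ioc hx
  rw [Texch_append_cons hxb, ← List.append_assoc, Texch_append_cons, List.sum_append, Nat.cast_add]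
  · ring
  · rw [List.sum_append, Nat.cast_add]
    obtain ⟨hgt, hle⟩ := hxb
    exact ⟨by omega, by omega⟩

lemma Texch_append_cons_of_mem_right (p q : List ℕ) (b : ℕ) {x : ℤ}
    (hx : x ∈ Ioc (0 : ℤ) q.sum) : Texch (p ++ b :: q) (p.sum + b + x) = Texch q x := by
  have h := Texch_append_right (p ++ [b]) hx
  rwa [List.sum_append, List.sum_singleton, Nat.cast_add, List.append_assoc,
    List.singleton_append] at h

lemma numOrbits_eq_ncard_image (l : List ℕ) :
    numOrbits l = (iterOrbit (Texch l) '' Ioc 0 (l.sum : ℤ)).ncard := by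
  unfold numOrbits
  congr 1
  ext S
  constructor
  · rintro ⟨x, h1, hn, rfl⟩
    exact ⟨x, ⟨h1, hn⟩, rfl⟩
  · rintro ⟨x, ⟨h1, hn⟩, rfl⟩
    exact ⟨x, h1, hn, rfl⟩

theorem numOrbits_reverse (l : List ℕ) : numOrbits l.reverse = numOrbits l := by
  have hsub : ∀ l : List ℕ, ∀ x ∈ Ioc (0 : ℤ) l.sum,
      iterOrbit (Texch l) x ⊆ iterOrbit (Texch l.reverse) x := by
    intro l x hx
    refine iterOrbit_subset_of_leftInvOn (mapsTo_Texch l) (leftInvOn_Texch_reverse l) ?_ hx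
    simpa only [List.sum_reverse] using Ioc_subset_periodicPts_Texch l.reverse
  rw [numOrbits_eq_ncard_image, numOrbits_eq_ncard_image, List.sum_reverse]
  congr 1
  refine image_congr fun x hx => Subset.antisymm ?_ (hsub l x hx)
  simpa only [List.reverse_reverse] using hsub l.reverse x (by rwa [List.sum_reverse])

end Exchange

section Enlarge

open Function Set

/-- The increasing injection `ℤ → ℤ` whose range is the complement of `Ioc e (e + d)`: it
relabels the points that remain when that interval is removed. -/
def skipIoc (e : ℤ) (d : ℕ) (x : ℤ) : ℤ := if x ≤ e then x else x + d

lemma skipIoc_of_le {e x : ℤ} (d : ℕ) (hx : x ≤ e) : skipIoc e d x = x := if_pos hx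

lemma skipIoc_of_lt {e x : ℤ} (d : ℕ) (hx : e < x) : skipIoc e d x = x + d := if_neg hx.not_ge

lemma injective_skipIoc (e : ℤ) (d : ℕ) : Injective (skipIoc e d) := by
  intro x y hxy
  unfold skipIoc at hxy
  split_ifs at hxy <;> omega

lemma image_skipIoc_Ioc {u e v : ℤ} (d : ℕ) (hue : u ≤ e) (hev : e ≤ v) :
    skipIoc e d '' Ioc u v = Ioc u (v + d) \ Ioc e (e + d) := by
  ext y
  constructor
  · rintro ⟨x, ⟨hux, hxv⟩, rfl⟩
    rcases le_or_gt x e with hx | hx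
    · rw [skipIoc_of_le d hx]
      exact ⟨⟨hux, by omega⟩, fun hJ => hx.not_gt hJ.1⟩
    · rw [skipIoc_of_lt d hx]
      exact ⟨⟨by omega, by omega⟩, fun hJ => hx.not_ge (by linarith [hJ.2])⟩
  · rintro ⟨⟨huy, hyv⟩, hJ⟩
    rcases le_or_gt y e with hy | hy
    · exact ⟨y, ⟨huy, by omega⟩, skipIoc_of_le d hy⟩
    · have hy' : e + d < y := not_le.1 fun h => hJ ⟨hy, h⟩
      exact ⟨y - d, ⟨by omega, by omega⟩, by rw [skipIoc_of_lt d (by omega), sub_add_cancel]⟩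

variable {p q : List ℕ} {b d : ℕ}

lemma Texch_append_add_cons_of_mem_Ioc (hd : q.sum = p.sum + d) {y : ℤ}
    (hy : y ∈ Ioc (p.sum : ℤ) (p.sum + b + d)) : Texch (p ++ (b + d) :: q) y = y + d := by
  rw [Texch_append_cons (by rwa [Nat.cast_add, ← add_assoc]), hd, Nat.cast_add,
    add_sub_cancel_left]

lemma Texch_append_add_cons_skipIoc_of_mem_left (hd : q.sum = p.sum + d) {x : ℤ}
    (hx : x ∈ Ioc (0 : ℤ) p.sum) :
    Texch (p ++ (b + d) :: q) (skipIoc p.sum d x) = skipIoc p.sum d (Texch (p ++ b :: q) x) := by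
  have hpos : 0 < Texch p x := (mapsTo_Texch p hx).1
  rw [skipIoc_of_le d hx.2, Texch_append_left _ hx, Texch_append_left _ hx, List.sum_cons,
    List.sum_cons, skipIoc_of_lt d (by omega)]
  push_cast [-Nat.cast_list_sum]
  ring

lemma Texch_append_add_cons_skipIoc_of_mem_middle (hd : q.sum = p.sum + d) {x : ℤ}
    (hx : x ∈ Ioc (p.sum : ℤ) (p.sum + b)) :
    Texch (p ++ (b + d) :: q) (skipIoc p.sum d x) = skipIoc p.sum d (Texch (p ++ b :: q) x) := by
  obtain ⟨hgt, hle⟩ := hx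
  rw [skipIoc_of_lt d hgt, Texch_append_add_cons_of_mem_Ioc hd ⟨by omega, by omega⟩,
    Texch_append_cons ⟨hgt, hle⟩, skipIoc_of_lt d (by omega)]
  omega

lemma isFirstReturnMap_Texch_append_add_cons (hd : q.sum = p.sum + d) :
    IsFirstReturnMap (Texch (p ++ b :: q)) (Texch (p ++ (b + d) :: q)) (skipIoc p.sum d)
      (Ioc 0 ((p ++ b :: q).sum : ℤ)) where
  mapsTo := mapsTo_Texch _
  injOn := (injective_skipIoc _ _).injOn
  exists_return x hx := by
    rw [cast_sum_append_cons] at hx ⊢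
    rcases le_or_gt x p.sum with hxa | hxa
    · exact ⟨0, Texch_append_add_cons_skipIoc_of_mem_left hd ⟨hx.1, hxa⟩, by simp⟩
    rcases le_or_gt x (p.sum + b) with hxb | hxb
    · exact ⟨0, Texch_append_add_cons_skipIoc_of_mem_middle hd ⟨hxa, hxb⟩, by simp⟩
    obtain ⟨z, rfl⟩ : ∃ z, x = p.sum + b + z := ⟨x - (p.sum + b), by ring⟩
    have hz : z ∈ Ioc (0 : ℤ) q.sum := ⟨by omega, by linarith [hx.2]⟩
    have hle := (mapsTo_Texch q hz).2
    have hstep : Texch (p ++ (b + d) :: q) (skipIoc p.sum d (p.sum + b + z)) = Texch q z := by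
      rw [skipIoc_of_lt d hxa, ← Texch_append_cons_of_mem_right p q (b + d) hz, Nat.cast_add]
      congr 1
      ring
    rw [Texch_append_cons_of_mem_right p q b hz]
    rcases le_or_gt (Texch q z) p.sum with hyJ | hyJ
    · exact ⟨0, hstep.trans (skipIoc_of_le d hyJ).symm, by simp⟩
    -- The enlarged exchange sends the point into the removed interval, so it returns in two steps.
    · refine ⟨1, ?_, fun k hk => ?_⟩
      · rw [iterate_succ_apply', iterate_one, hstep, skipIoc_of_lt d hyJ,
          Texch_append_add_cons_of_mem_Ioc hd ⟨hyJ, by omega⟩]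
      · rw [Nat.lt_one_iff.1 hk, zero_add, iterate_one, hstep,
          image_skipIoc_Ioc d (by omega) (by omega)]
        exact fun h => h.2 ⟨hyJ, by omega⟩

theorem numOrbits_append_add_cons_of_sum_eq (hd : q.sum = p.sum + d) :
    numOrbits (p ++ (b + d) :: q) = numOrbits (p ++ b :: q) := by
  have himage : skipIoc p.sum d '' Ioc 0 ((p ++ b :: q).sum : ℤ) =
      Ioc 0 ((p ++ (b + d) :: q).sum : ℤ) \ Ioc (p.sum : ℤ) (p.sum + d) := by
    rw [cast_sum_append_cons, cast_sum_append_cons, image_skipIoc_Ioc d (by omega) (by omega)]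
    congr 2
    push_cast [-Nat.cast_list_sum]
    ring
  rw [numOrbits_eq_ncard_image, numOrbits_eq_ncard_image]
  refine (isFirstReturnMap_Texch_append_add_cons hd).ncard_image_iterOrbit_eq
    (mapsTo_iff_image_subset.2 (himage.trans_subset sdiff_subset))
    (Ioc_subset_periodicPts_Texch _) fun y hy => ?_
  rw [himage]
  by_cases hJ : y ∈ Ioc (p.sum : ℤ) (p.sum + d)
  · refine ⟨1, mapsTo_Texch _ hy, ?_⟩
    rw [iterate_one, Texch_append_add_cons_of_mem_Ioc hd ⟨hJ.1, by linarith [hJ.2]⟩]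
    exact fun h => absurd hJ.1 (by linarith [h.2])
  · exact ⟨0, hy, hJ⟩

theorem numOrbits_append_add_natAbs_cons (p q : List ℕ) (b : ℕ) :
    numOrbits (p ++ (b + ((q.sum : ℤ) - p.sum).natAbs) :: q) = numOrbits (p ++ b :: q) := by
  have hreverse : ∀ c : ℕ, (p ++ c :: q).reverse = q.reverse ++ c :: p.reverse := by simp
  rcases le_total p.sum q.sum with h | h
  · exact numOrbits_append_add_cons_of_sum_eq (by omega)
  · rw [← numOrbits_reverse, hreverse, ← numOrbits_reverse (p ++ b :: q), hreverse]
    exact numOrbits_append_add_cons_of_sum_eq (by rw [List.sum_reverse, List.sum_reverse]; omega)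

end Enlarge

/-- Lemma 3.3: replacing `λ_t` by `λ_t + |s_t|` does not change the
number of orbits of the symmetric discrete interval exchange. -/
theorem numOrbits_set_add_abs_transParam (l : List ℕ) (hl : IsComposition l)
    (t : ℕ) (ht : t < l.length) :
    numOrbits (l.set t (l.getD t 0 + (transParam l t).natAbs)) = numOrbits l := by
  calc numOrbits (l.set t (l.getD t 0 + (transParam l t).natAbs))
      = numOrbits (l.take t ++ (l[t] + (transParam l t).natAbs) :: l.drop (t + 1)) := by
        rw [List.set_eq_take_append_cons_drop, if_pos ht, List.getD_eq_getElem l 0 ht]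
    _ = numOrbits (l.take t ++ l[t] :: l.drop (t + 1)) :=
        numOrbits_append_add_natAbs_cons (l.take t) (l.drop (t + 1)) l[t]
    _ = numOrbits l := by rw [← List.drop_eq_getElem_cons ht, List.take_append_drop]
end

section
/- Let λ = (λ_1,…,λ_r) be a circular composition and let t ∈ {1,…,r} satisfy λ_t > |s_t|. Then λ_i < |s_i| for every index i ∈ {1,…,r} with i ≠ t, where s_i denotes the i-th translation parameter of λ. -/
/-- A composition is circular if its symmetric discrete interval exchange is minimal,
i.e. has exactly one orbit. -/
def IsCircular (l : List ℕ) : Prop := numOrbits l = 1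

section

variable {l : List ℕ} {i : ℕ}

theorem getElem_add_transParam (hi : i < l.length) :
    (l[i] : ℤ) + transParam l i = l.sum - 2 * (l.take i).sum := by
  have sum_succ := l.sum_take_succ i hi
  have sum_split := l.sum_take_add_sum_drop (i + 1)
  unfold transParam
  lia

theorem getElem_sub_transParam (hi : i < l.length) :
    (l[i] : ℤ) - transParam l i = 2 * (l.take (i + 1)).sum - l.sum := by
  have sum_succ := l.sum_take_succ i hi
  have sum_split := l.sum_take_add_sum_drop (i + 1)
  unfold transParam
  lia

theorem abs_transParam_lt_getElem_iff (hi : i < l.length) :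
    |transParam l i| < (l[i] : ℤ) ↔
      2 * (l.take i).sum < l.sum ∧ l.sum < 2 * (l.take (i + 1)).sum := by
  have left_gap := getElem_add_transParam hi
  have right_gap := getElem_sub_transParam hi
  rw [abs_lt]
  lia

theorem getElem_lt_abs_transParam_iff (hi : i < l.length) :
    (l[i] : ℤ) < |transParam l i| ↔
      2 * (l.take (i + 1)).sum < l.sum ∨ l.sum < 2 * (l.take i).sum := by
  have left_gap := getElem_add_transParam hi
  have right_gap := getElem_sub_transParam hi
  rw [lt_abs]
  lia

end

theorem part_lt_abs_transParam_of_circular_general {l : List ℕ} {i t : ℕ}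
    (hi : i < l.length) (ht : t < l.length) (hne : i ≠ t)
    (hlt : |transParam l t| < (l[t] : ℤ)) : (l[i] : ℤ) < |transParam l i| := by
  obtain ⟨start_lt_mid, mid_lt_end⟩ := (abs_transParam_lt_getElem_iff ht).mp hlt
  refine (getElem_lt_abs_transParam_iff hi).mpr ?_
  rcases hne.lt_or_gt with i_lt_t | t_lt_i
  · left
    calc 2 * (l.take (i + 1)).sum
      _ ≤ 2 * (l.take t).sum := Nat.mul_le_mul_left 2 (l.monotone_sum_take i_lt_t)
      _ < l.sum := start_lt_mid
  · right
    calc l.sum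
      _ < 2 * (l.take (t + 1)).sum := mid_lt_end
      _ ≤ 2 * (l.take i).sum := Nat.mul_le_mul_left 2 (l.monotone_sum_take t_lt_i)

/-- Lemma 4.1: in a circular composition, if `λ_t > |s_t|`
then `λ_i < |s_i|` for every other index `i`. -/
theorem part_lt_abs_transParam_of_circular (l : List ℕ) (hl : IsComposition l)
    (hc : IsCircular l) (t : ℕ) (ht : t < l.length)
    (hgt : |transParam l t| < (l.getD t 0 : ℤ)) :
    ∀ i < l.length, i ≠ t → (l.getD i 0 : ℤ) < |transParam l i| := by
  rw [List.getD_eq_getElem _ _ ht] at hgt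
  exact fun i hi hne ↦
    List.getD_eq_getElem l 0 hi ▸ part_lt_abs_transParam_of_circular_general hi ht hne hgt
end

section
/- Every circular composition λ different from (1,1) has a unique parent: λ is obtained from exactly one circular composition μ by exactly one application of a child rule, where the child rules are: (Type 1) replace μ_t by μ_t + |s_t(μ)| for some t ∈ {1,…,r}; (Type 2) insert the part |δ_t(μ)| after position t for some t ∈ {0,…,r} satisfying δ_t(μ) > μ_{t+1} or −δ_t(μ) > μ_t, where δ_t(μ) = n − 2 Σ_{j≤t} μ_j for μ a composition of n. -/
/-- `δ_t = n - 2·(λ_1 + … + λ_t)` for a composition of `n`, with `t ∈ {0,…,r}`. -/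
def deltaParam (l : List ℕ) (t : ℕ) : ℤ := (l.sum : ℤ) - 2 * ((l.take t).sum : ℤ)

/-- The child rules of the tree of circular compositions.  `IsChild μ c` holds when `c` is
obtained from `μ` by one application of a child rule:
* Type 1: replace the part `μ_t` by `μ_t + |s_t(μ)|` for some index `t` of `μ`;
* Type 2: insert the part `|δ_t(μ)|` after position `t ∈ {0,…,r}`, provided
  `δ_t(μ) > μ_{t+1}` or `-δ_t(μ) > μ_t` (1-based; the comparison with a nonexistent
  boundary part is dropped). -/
def IsChild (μ c : List ℕ) : Prop :=
  (∃ t < μ.length, c = μ.set t (μ.getD t 0 + (transParam μ t).natAbs)) ∨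
  (∃ t ≤ μ.length,
    ((t < μ.length ∧ (μ.getD t 0 : ℤ) < deltaParam μ t) ∨
      (0 < t ∧ (μ.getD (t - 1) 0 : ℤ) < -deltaParam μ t)) ∧
    c = μ.insertIdx t (deltaParam μ t).natAbs)

section Exchange

variable {X Y l : List ℕ} {m k : ℕ} {x : ℤ}

lemma Texch_block (hx : (X.sum : ℤ) < x) (hx' : x ≤ (X.sum : ℤ) + m) :
    Texch (X ++ m :: Y) x = x + ((Y.sum : ℤ) - X.sum) := by
  have hmono := List.monotone_sum_take (X ++ m :: Y)
  have hstart : ((X ++ m :: Y).take X.length).sum = X.sum := by simp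
  have hend : ((X ++ m :: Y).take (X.length + 1)).sum = X.sum + m := by
    simp [List.take_append, List.take_of_length_le]
  have hshift : transParam (X ++ m :: Y) X.length = Y.sum - X.sum := by
    simp [-Nat.cast_list_sum, transParam, List.drop_append, List.drop_of_length_le]
  rw [Texch, Finset.sum_eq_single X.length, hstart, hend, hshift, if_pos ⟨hx, by omega⟩]
  · intro i _ hne
    refine if_neg fun hmem => ?_
    rcases lt_or_gt_of_ne hne with hlt | hgt
    · have hle := hmono (show i + 1 ≤ X.length from hlt)
      simp only [hstart] at hle
      omega
    · have hle := hmono (show X.length + 1 ≤ i from hgt)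
      simp only [hend] at hle
      omega
  · intro hmem
    simp at hmem

lemma exists_block_of_mem_Icc (hx : x ∈ Set.Icc 1 (l.sum : ℤ)) :
    ∃ (X : List ℕ) (m : ℕ) (Y : List ℕ),
      l = X ++ m :: Y ∧ (X.sum : ℤ) < x ∧ x ≤ (X.sum : ℤ) + m := by
  induction l generalizing x with
  | nil => simp at hx
  | cons a l ih =>
    obtain ⟨hlo, hhi⟩ := hx
    rw [List.sum_cons] at hhi
    by_cases ha : x ≤ a
    · exact ⟨[], a, l, rfl, by rw [List.sum_nil]; omega, by rw [List.sum_nil]; omega⟩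
    · obtain ⟨X, m, Y, rfl, hX, hm⟩ := ih (x := x - a) ⟨by omega, by omega⟩
      exact ⟨a :: X, m, Y, rfl, by rw [List.sum_cons]; omega, by rw [List.sum_cons]; omega⟩

lemma Texch_mapsTo (l : List ℕ) :
    Set.MapsTo (Texch l) (Set.Icc 1 (l.sum : ℤ)) (Set.Icc 1 (l.sum : ℤ)) := by
  intro x hx
  obtain ⟨X, m, Y, rfl, hX, hm⟩ := exists_block_of_mem_Icc hx
  rw [Texch_block hX hm, List.sum_append, List.sum_cons]
  constructor <;> omega

lemma Texch_append_left_s13 (Y : List ℕ) (hx : x ∈ Set.Icc 1 (X.sum : ℤ)) :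
    Texch (X ++ Y) x = Texch X x + Y.sum := by
  obtain ⟨U, m, V, rfl, hU, hm⟩ := exists_block_of_mem_Icc hx
  rw [List.append_assoc, List.cons_append, Texch_block hU hm, Texch_block hU hm, List.sum_append]
  omega

lemma Texch_append_right_s13 (X : List ℕ) (hx : x - X.sum ∈ Set.Icc 1 (Y.sum : ℤ)) :
    Texch (X ++ Y) x = Texch Y (x - X.sum) := by
  obtain ⟨U, m, V, rfl, hU, hm⟩ := exists_block_of_mem_Icc hx
  rw [← List.append_assoc, Texch_block hU hm, Texch_block] <;> rw [List.sum_append] <;> omega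

lemma Texch_zero_cons (hx : x ∈ Set.Icc 1 (Y.sum : ℤ)) :
    Texch (0 :: Y) x = Texch Y x := by
  simpa using Texch_append_right_s13 [0] (x := x) (by simpa using hx)

lemma Texch_append_zero_cons (hx : x ∈ Set.Icc 1 ((X ++ Y).sum : ℤ)) :
    Texch (X ++ 0 :: Y) x = Texch (X ++ Y) x := by
  obtain ⟨hlo, hhi⟩ := hx
  rw [List.sum_append] at hhi
  by_cases hX : x ≤ X.sum
  · rw [Texch_append_left_s13 _ ⟨hlo, hX⟩, Texch_append_left_s13 _ ⟨hlo, hX⟩, List.sum_cons, zero_add]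
  · have hY : x - X.sum ∈ Set.Icc 1 (Y.sum : ℤ) := ⟨by omega, by omega⟩
    rw [Texch_append_right_s13 X hY, Texch_append_right_s13 X (by simpa using hY), Texch_zero_cons hY]

lemma Texch_reverse (hx : x ∈ Set.Icc 1 (l.sum : ℤ)) :
    Texch l.reverse (l.sum + 1 - x) = l.sum + 1 - Texch l x := by
  obtain ⟨X, m, Y, rfl, hX, hm⟩ := exists_block_of_mem_Icc hx
  rw [List.reverse_append, List.reverse_cons, List.append_assoc, List.singleton_append,
    Texch_block hX hm, Texch_block] <;>
    simp only [List.sum_reverse, List.sum_append, List.sum_cons] <;> omega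

/-- The factor map from `X ++ m :: Y` to `X ++ k :: Y`, where `k = m - s` and `s = ΣY - ΣX ≥ 0`:
each point of the block `m` beyond its first `k` is identified with its image under `T`. -/
def collapse (X : List ℕ) (m : ℕ) (Y : List ℕ) (x : ℤ) : ℤ :=
  if x ≤ (X.sum : ℤ) + m then x else x - ((Y.sum : ℤ) - X.sum)

lemma surjOn_collapse (hXY : X.sum ≤ Y.sum) (hk : k + Y.sum = m + X.sum) :
    Set.SurjOn (collapse X m Y) (Set.Icc 1 ((X ++ m :: Y).sum : ℤ))
      (Set.Icc 1 ((X ++ k :: Y).sum : ℤ)) := by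
  simp only [List.sum_append, List.sum_cons]
  rintro y ⟨hlo, hhi⟩
  by_cases hy : y ≤ (X.sum : ℤ) + m
  · exact ⟨y, ⟨hlo, by omega⟩, if_pos hy⟩
  · refine ⟨y + ((Y.sum : ℤ) - X.sum), ⟨by omega, by omega⟩, ?_⟩
    rw [collapse, if_neg (by omega), add_sub_cancel_right]

lemma collapse_Texch (hXY : X.sum ≤ Y.sum) (hk : k + Y.sum = m + X.sum)
    (hx : x ∈ Set.Icc 1 ((X ++ m :: Y).sum : ℤ)) :
    collapse X m Y (Texch (X ++ m :: Y) x) = collapse X m Y x ∨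
      collapse X m Y (Texch (X ++ m :: Y) x) = Texch (X ++ k :: Y) (collapse X m Y x) := by
  obtain ⟨hlo, hhi⟩ := hx
  simp only [List.sum_append, List.sum_cons] at hhi
  have of_le {z : ℤ} (hz : z ≤ (X.sum : ℤ) + m) : collapse X m Y z = z := if_pos hz
  have of_gt {z : ℤ} (hz : (X.sum : ℤ) + m < z) :
      collapse X m Y z = z - ((Y.sum : ℤ) - X.sum) := if_neg hz.not_ge
  rcases le_or_gt x (X.sum : ℤ) with hX | hX
  · obtain ⟨hT, -⟩ := Texch_mapsTo X ⟨hlo, hX⟩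
    right
    rw [Texch_append_left_s13 _ ⟨hlo, hX⟩, List.sum_cons, of_gt (by omega), of_le (by omega),
      Texch_append_left_s13 _ ⟨hlo, hX⟩, List.sum_cons]
    omega
  rcases le_or_gt x ((X.sum : ℤ) + m) with hm | hm
  · rw [Texch_block hX hm, of_le hm]
    rcases le_or_gt x ((X.sum : ℤ) + k) with hxk | hxk
    · right
      rw [of_le (by omega), Texch_block hX hxk]
    · left
      rw [of_gt (by omega), add_sub_cancel_right]
  · have hY : x - (X ++ [m]).sum ∈ Set.Icc 1 (Y.sum : ℤ) := by
      rw [List.sum_append, List.sum_singleton]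
      exact ⟨by omega, by omega⟩
    have hshift : x - ((Y.sum : ℤ) - X.sum) - (X ++ [k]).sum = x - (X ++ [m]).sum := by
      simp only [List.sum_append, List.sum_singleton]
      omega
    obtain ⟨-, hT⟩ := Texch_mapsTo Y hY
    right
    rw [of_gt hm, List.append_cons X m, List.append_cons X k, Texch_append_right_s13 _ hY,
      Texch_append_right_s13 _ (hshift ▸ hY), hshift, of_le (by omega)]

end Exchange

lemma exists_iterate_eq_of_delayed_semiconj {α β : Type*} {T : α → α} {T' : β → β} {f : α → β}
    {s : Set α} (hT : Set.MapsTo T s s)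
    (hstep : ∀ x ∈ s, f (T x) = f x ∨ f (T x) = T' (f x)) {x : α} (hx : x ∈ s) (k : ℕ) :
    ∃ j, T'^[j] (f x) = f (T^[k] x) := by
  induction k with
  | zero => exact ⟨0, rfl⟩
  | succ k ih =>
    obtain ⟨j, hj⟩ := ih
    rw [Function.iterate_succ_apply']
    rcases hstep _ (hT.iterate k hx) with hstay | hmove
    · exact ⟨j, hj.trans hstay.symm⟩
    · exact ⟨j + 1, by rw [Function.iterate_succ_apply', hj, hmove]⟩

lemma self_mem_orbit (l : List ℕ) (x : ℤ) : x ∈ orbit l x := ⟨0, rfl⟩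

lemma orbit_subset_of_mem {l : List ℕ} {x y : ℤ} (hy : y ∈ orbit l x) :
    orbit l y ⊆ orbit l x := by
  obtain ⟨k, rfl⟩ := hy
  rintro _ ⟨j, rfl⟩
  exact ⟨j + k, Function.iterate_add_apply _ _ _ _⟩

lemma isCircular_iff {l : List ℕ} : IsCircular l ↔
    0 < l.sum ∧ ∀ x ∈ Set.Icc 1 (l.sum : ℤ), Set.Icc 1 (l.sum : ℤ) ⊆ orbit l x := by
  rw [IsCircular, numOrbits, Set.ncard_eq_one]
  constructor
  · rintro ⟨S, hS⟩
    have orbit_eq {x : ℤ} (hx : x ∈ Set.Icc 1 (l.sum : ℤ)) : orbit l x = S :=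
      hS.subset ⟨x, hx.1, hx.2, rfl⟩
    obtain ⟨z, hz, hz', -⟩ : S ∈ orbitsSet l := hS ▸ rfl
    refine ⟨by omega, fun x hx y hy => ?_⟩
    rw [orbit_eq hx, ← orbit_eq hy]
    exact self_mem_orbit l y
  · rintro ⟨hpos, horbit⟩
    have hone : (1 : ℤ) ∈ Set.Icc 1 (l.sum : ℤ) := ⟨le_rfl, by omega⟩
    refine ⟨orbit l 1, Set.eq_singleton_iff_unique_mem.2 ⟨⟨1, hone.1, hone.2, rfl⟩, ?_⟩⟩
    rintro _ ⟨x, hx, hx', rfl⟩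
    exact (orbit_subset_of_mem (horbit 1 hone ⟨hx, hx'⟩)).antisymm
      (orbit_subset_of_mem (horbit x ⟨hx, hx'⟩ hone))

namespace IsCircular

lemma sum_pos {l : List ℕ} (hc : IsCircular l) : 0 < l.sum := (isCircular_iff.1 hc).1

lemma of_delayed_factor {l l' : List ℕ} (hc : IsCircular l) (hpos : 0 < l'.sum) {f : ℤ → ℤ}
    (hsurj : Set.SurjOn f (Set.Icc 1 (l.sum : ℤ)) (Set.Icc 1 (l'.sum : ℤ)))
    (hstep : ∀ x ∈ Set.Icc 1 (l.sum : ℤ),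
      f (Texch l x) = f x ∨ f (Texch l x) = Texch l' (f x)) :
    IsCircular l' := by
  refine isCircular_iff.2 ⟨hpos, fun y hy z hz => ?_⟩
  obtain ⟨x, hx, rfl⟩ := hsurj hy
  obtain ⟨w, hw, rfl⟩ := hsurj hz
  obtain ⟨k, rfl⟩ := (isCircular_iff.1 hc).2 x hx hw
  exact exists_iterate_eq_of_delayed_semiconj (Texch_mapsTo l) hstep hx k

lemma reverse {l : List ℕ} (hc : IsCircular l) : IsCircular l.reverse := by
  refine hc.of_delayed_factor (f := fun x => l.sum + 1 - x) ?_ ?_ ?_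
  · simpa only [List.sum_reverse] using hc.sum_pos
  · rw [List.sum_reverse]
    rintro y ⟨hlo, hhi⟩
    exact ⟨l.sum + 1 - y, ⟨by omega, by omega⟩, by ring⟩
  · exact fun x hx => Or.inr (Texch_reverse hx).symm

lemma erase_zero_part {X Y : List ℕ} (hc : IsCircular (X ++ 0 :: Y)) : IsCircular (X ++ Y) := by
  have hsum : (X ++ 0 :: Y).sum = (X ++ Y).sum := by simp
  refine hc.of_delayed_factor (f := id) (hsum ▸ hc.sum_pos) ?_ ?_
  · rw [hsum]
    exact Set.surjOn_id _
  · rw [hsum]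
    exact fun x hx => Or.inr (Texch_append_zero_cons hx)

lemma shrink_of_le {X Y : List ℕ} {m k : ℕ} (hc : IsCircular (X ++ m :: Y))
    (hXY : X.sum ≤ Y.sum) (hk : k + Y.sum = m + X.sum) : IsCircular (X ++ k :: Y) := by
  refine hc.of_delayed_factor ?_ (surjOn_collapse hXY hk) fun x => collapse_Texch hXY hk
  have hpos := hc.sum_pos
  simp only [List.sum_append, List.sum_cons] at hpos ⊢
  omega

lemma sum_le_two_of_Texch_Texch_eq {l : List ℕ} (hc : IsCircular l) {x : ℤ}
    (hx : x ∈ Set.Icc 1 (l.sum : ℤ)) (hperiod : Texch l (Texch l x) = x) : l.sum ≤ 2 := by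
  have horbit : orbit l x ⊆ {x, Texch l x} := by
    rintro _ ⟨k, rfl⟩
    induction k with
    | zero => exact Or.inl rfl
    | succ k ih =>
      rw [Function.iterate_succ_apply']
      rcases ih with ih | ih
      · exact Or.inr (congrArg _ ih)
      · exact Or.inl ((congrArg _ ih).trans hperiod)
  have hcard := Finset.card_le_card (s := Finset.Icc 1 (l.sum : ℤ)) (t := {x, Texch l x})
    fun y hy => by simpa using horbit ((isCircular_iff.1 hc).2 x hx (Finset.mem_Icc.1 hy))
  rw [Int.card_Icc, add_sub_cancel_right, Int.toNat_natCast] at hcard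
  exact hcard.trans Finset.card_le_two

end IsCircular

section CentralBlock

variable {X Y : List ℕ} {m k : ℕ}

/-- The absolute value of the translation parameter of the block `m` of `X ++ m :: Y`, and that of
`δ` at the cut between `X` and `Y` in `X ++ Y`. -/
def absShift (X Y : List ℕ) : ℕ := ((Y.sum : ℤ) - X.sum).natAbs

/-- The condition under which a type 2 child may be formed by inserting a part between `X` and `Y`:
`δ` exceeds the first part of `Y`, or `-δ` exceeds the last part of `X`. -/
def IsInsertionCut (X Y : List ℕ) : Prop :=
  (∃ q ∈ Y.head?, X.sum + q < Y.sum) ∨ ∃ p ∈ X.getLast?, Y.sum + p < X.sum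

/-- The block `m` of the composition `X ++ m :: Y` of `n` is central: the midpoint `n / 2` is
interior to it, or is one of its ends and the block on the other side is shorter. -/
def IsCentral (X : List ℕ) (m : ℕ) (Y : List ℕ) : Prop :=
  absShift X Y < m ∨ absShift X Y = m ∧ IsInsertionCut X Y

/-- The composition obtained from `X ++ m :: Y` by shrinking the block `m` by `absShift X Y`, and
removing it if nothing remains; the candidate for the parent when `m` is central. -/
def shrinkBlock (X : List ℕ) (m : ℕ) (Y : List ℕ) : List ℕ :=
  if absShift X Y < m then X ++ (m - absShift X Y) :: Y else X ++ Y

lemma IsCentral.absShift_le (h : IsCentral X m Y) : absShift X Y ≤ m :=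
  h.elim le_of_lt fun h => h.1.le

lemma IsCircular.shrink (hc : IsCircular (X ++ (k + absShift X Y) :: Y)) :
    IsCircular (X ++ k :: Y) := by
  rcases le_total X.sum Y.sum with hXY | hYX
  · exact hc.shrink_of_le hXY (by rw [absShift]; omega)
  · have hrev : IsCircular (Y.reverse ++ (k + absShift X Y) :: X.reverse) := by
      simpa using hc.reverse
    simpa using (hrev.shrink_of_le (k := k) (by simpa only [List.sum_reverse])
      (by simp only [absShift, List.sum_reverse]; omega)).reverse

lemma isCircular_shrinkBlock (hc : IsCircular (X ++ m :: Y)) (h : absShift X Y ≤ m) :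
    IsCircular (shrinkBlock X m Y) := by
  rw [← Nat.sub_add_cancel h] at hc
  have hshrink := hc.shrink
  rw [shrinkBlock]
  split_ifs with hlt
  · exact hshrink
  · rw [Nat.sub_eq_zero_of_le (not_lt.1 hlt)] at hshrink
    exact hshrink.erase_zero_part

lemma pos_of_mem_shrinkBlock (hpos : ∀ x ∈ X ++ m :: Y, 0 < x) :
    ∀ x ∈ shrinkBlock X m Y, 0 < x := by
  intro x hx
  rw [shrinkBlock] at hx
  split_ifs at hx with hlt <;> simp only [List.mem_append, List.mem_cons] at hx hpos
  · rcases hx with hX | rfl | hY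
    · exact hpos x (Or.inl hX)
    · exact Nat.sub_pos_of_lt hlt
    · exact hpos x (Or.inr (Or.inr hY))
  · exact hpos x (hx.imp_right Or.inr)

lemma eq_nil_of_forall_pos_of_sum_eq_zero {l : List ℕ} (hpos : ∀ x ∈ l, 0 < x)
    (hsum : l.sum = 0) : l = [] :=
  List.eq_nil_iff_forall_not_mem.2 fun x hx =>
    (hpos x hx).ne' (List.sum_eq_zero_iff.1 hsum x hx)

lemma IsCircular.eq_one_one_of_equal_halves {p : ℕ} (hc : IsCircular (X ++ p :: p :: Y))
    (hpos : ∀ x ∈ X ++ p :: p :: Y, 0 < x) (hXY : X.sum = Y.sum) : X ++ p :: p :: Y = [1, 1] := by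
  have hp : 0 < p := hpos p (by simp)
  have hleft : Texch (X ++ p :: p :: Y) (X.sum + 1) = X.sum + 1 + p := by
    rw [Texch_block (by omega) (by omega), List.sum_cons]
    omega
  have hright : Texch (X ++ p :: p :: Y) (X.sum + 1 + p) = X.sum + 1 := by
    rw [List.append_cons, Texch_block] <;>
      rw [List.sum_append, List.sum_singleton] <;> omega
  have hsum : (X ++ p :: p :: Y).sum = 2 * (X.sum + p) := by
    simp only [List.sum_append, List.sum_cons]
    omega
  have hle := hc.sum_le_two_of_Texch_Texch_eq (x := X.sum + 1)
    (by rw [hsum]; exact ⟨by omega, by omega⟩) (by rw [hleft, hright])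
  obtain rfl : X = [] :=
    eq_nil_of_forall_pos_of_sum_eq_zero (fun x hx => hpos x (by simp [hx])) (by omega)
  obtain rfl : Y = [] :=
    eq_nil_of_forall_pos_of_sum_eq_zero (fun x hx => hpos x (by simp [hx])) (by omega)
  obtain rfl : p = 1 := by omega
  rfl

lemma IsCircular.exists_isCentral {l : List ℕ} (hc : IsCircular l) (hpos : ∀ x ∈ l, 0 < x)
    (hne : l ≠ [1, 1]) : ∃ X m Y, IsCentral X m Y ∧ l = X ++ m :: Y := by
  have hn := hc.sum_pos
  -- The block containing `⌈n / 2⌉` has the midpoint in its interior or as its right end.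
  obtain ⟨X, m, Y, rfl, hX, hm⟩ :=
    exists_block_of_mem_Icc (l := l) (x := ((l.sum + 1) / 2 : ℕ)) ⟨by omega, by omega⟩
  have hm0 : 0 < m := hpos m (by simp)
  simp only [List.sum_append, List.sum_cons] at hX hm
  by_cases hmid : X.sum + m = Y.sum
  · obtain _ | ⟨q, Y⟩ := Y
    · simp only [List.sum_nil] at hmid
      omega
    simp only [List.sum_cons] at hmid
    rcases lt_trichotomy q m with hlt | rfl | hgt
    · refine ⟨X, m, q :: Y, Or.inr ⟨?_, Or.inl ⟨q, rfl, ?_⟩⟩, rfl⟩ <;>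
        simp only [absShift, List.sum_cons] <;> omega
    · exact absurd (hc.eq_one_one_of_equal_halves hpos (by omega)) hne
    · refine ⟨X ++ [m], q, Y, Or.inr ⟨?_, Or.inr ⟨m, by simp, ?_⟩⟩, List.append_cons _ _ _⟩ <;>
        simp only [absShift, List.sum_append, List.sum_singleton] <;> omega
  · exact ⟨X, m, Y, Or.inl (by rw [absShift]; omega), rfl⟩

lemma append_cons_eq_append_cons_trichotomy {α : Type*} {X Y X' Y' : List α} {m m' : α}
    (h : X ++ m :: Y = X' ++ m' :: Y') :
    (X = X' ∧ m = m' ∧ Y = Y') ∨ (∃ Z, X' = X ++ m :: Z ∧ Y = Z ++ m' :: Y') ∨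
      ∃ Z, X = X' ++ m' :: Z ∧ Y' = Z ++ m :: Y := by
  rcases List.append_eq_append_iff.1 h with ⟨_ | ⟨a, Z⟩, rfl, hZ⟩ | ⟨_ | ⟨a, Z⟩, rfl, hZ⟩ <;>
    simp_all

/-- Two blocks touching the midpoint from both sides would each have to be the longer one. -/
lemma not_isCentral_of_isCentral_left {Z : List ℕ} {m' : ℕ} (hpos : ∀ x ∈ Z, 0 < x)
    (h : IsCentral X m (Z ++ m' :: Y)) : ¬ IsCentral (X ++ m :: Z) m' Y := by
  intro h'
  have hle := h.absShift_le
  have hle' := h'.absShift_le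
  simp only [absShift, List.sum_append, List.sum_cons] at hle hle'
  obtain rfl : Z = [] := eq_nil_of_forall_pos_of_sum_eq_zero hpos (by omega)
  simp only [IsCentral, IsInsertionCut, absShift, List.nil_append, List.sum_append, List.sum_cons,
    List.sum_nil, List.head?_cons, List.getLast?_concat, Option.mem_some_iff, exists_eq_left']
    at h h'
  rcases h with h | ⟨h, hm | ⟨p, -, hp⟩⟩ <;> rcases h' with h' | ⟨h', ⟨q, -, hq⟩ | hm'⟩ <;> omega

lemma IsCentral.unique {X' Y' : List ℕ} {m' : ℕ} (h : IsCentral X m Y)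
    (h' : IsCentral X' m' Y') (heq : X ++ m :: Y = X' ++ m' :: Y')
    (hpos : ∀ x ∈ X ++ m :: Y, 0 < x) : X = X' ∧ m = m' ∧ Y = Y' := by
  rcases append_cons_eq_append_cons_trichotomy heq with heq | ⟨Z, rfl, rfl⟩ | ⟨Z, rfl, rfl⟩
  · exact heq
  · exact absurd h' (not_isCentral_of_isCentral_left (fun x hx => hpos x (by simp [hx])) h)
  · exact absurd h (not_isCentral_of_isCentral_left (fun x hx => hpos x (by simp [hx])) h')

end CentralBlock

lemma natAbs_transParam_append_cons (X Y : List ℕ) (m : ℕ) :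
    (transParam (X ++ m :: Y) X.length).natAbs = absShift X Y := by
  simp [-Nat.cast_list_sum, transParam, absShift, List.drop_append, List.drop_of_length_le]

lemma deltaParam_append (X Y : List ℕ) : deltaParam (X ++ Y) X.length = Y.sum - X.sum := by
  rw [deltaParam, List.take_left, List.sum_append]
  omega

lemma insertIdx_append_length {α : Type*} (X Y : List α) (a : α) :
    (X ++ Y).insertIdx X.length a = X ++ a :: Y := by
  induction X with
  | nil => rfl
  | cons b X ih => simpa using ih

lemma isInsertionCut_iff_getD_lt_deltaParam {X Y : List ℕ} :
    IsInsertionCut X Y ↔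
      (X.length < (X ++ Y).length ∧
        ((X ++ Y).getD X.length 0 : ℤ) < deltaParam (X ++ Y) X.length) ∨
      (0 < X.length ∧
        ((X ++ Y).getD (X.length - 1) 0 : ℤ) < -deltaParam (X ++ Y) X.length) := by
  rw [deltaParam_append]
  refine or_congr ?_ ?_
  · obtain _ | ⟨q, Y⟩ := Y
    · simp
    · simp [-Nat.cast_list_sum]
      omega
  · obtain rfl | ⟨X, p, rfl⟩ := X.eq_nil_or_concat
    · simp
    · simp [-Nat.cast_list_sum]
      omega

lemma isChild_iff_append {μ c : List ℕ} : IsChild μ c ↔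
    (∃ X k Y, μ = X ++ k :: Y ∧ c = X ++ (k + absShift X Y) :: Y) ∨
    ∃ X Y, IsInsertionCut X Y ∧ μ = X ++ Y ∧ c = X ++ absShift X Y :: Y := by
  refine or_congr ⟨?_, ?_⟩ ⟨?_, ?_⟩
  · rintro ⟨t, ht, rfl⟩
    obtain ⟨X, k, Y, rfl, rfl⟩ : ∃ X k Y, μ = X ++ k :: Y ∧ X.length = t :=
      ⟨μ.take t, μ[t], μ.drop (t + 1), by simp, by simpa using ht.le⟩
    exact ⟨X, k, Y, rfl, by simp [natAbs_transParam_append_cons]⟩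
  · rintro ⟨X, k, Y, rfl, rfl⟩
    exact ⟨X.length, by simp, by simp [natAbs_transParam_append_cons]⟩
  · rintro ⟨t, ht, hcut, rfl⟩
    obtain ⟨X, Y, rfl, rfl⟩ : ∃ X Y, μ = X ++ Y ∧ X.length = t :=
      ⟨μ.take t, μ.drop t, (List.take_append_drop t μ).symm, List.length_take_of_le ht⟩
    refine ⟨X, Y, isInsertionCut_iff_getD_lt_deltaParam.2 hcut, rfl, ?_⟩
    rw [insertIdx_append_length, deltaParam_append, absShift]
  · rintro ⟨X, Y, hcut, rfl, rfl⟩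
    refine ⟨X.length, by simp, isInsertionCut_iff_getD_lt_deltaParam.1 hcut, ?_⟩
    rw [insertIdx_append_length, deltaParam_append, absShift]

lemma isChild_iff_exists_isCentral {μ c : List ℕ} (hμ : ∀ x ∈ μ, 0 < x) : IsChild μ c ↔
    ∃ X m Y, IsCentral X m Y ∧ c = X ++ m :: Y ∧ μ = shrinkBlock X m Y := by
  rw [isChild_iff_append]
  constructor
  · rintro (⟨X, k, Y, rfl, rfl⟩ | ⟨X, Y, hcut, rfl, rfl⟩)
    · have hlt : absShift X Y < k + absShift X Y := Nat.lt_add_of_pos_left (hμ k (by simp))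
      exact ⟨X, _, Y, Or.inl hlt, rfl, by rw [shrinkBlock, if_pos hlt, Nat.add_sub_cancel]⟩
    · exact ⟨X, _, Y, Or.inr ⟨rfl, hcut⟩, rfl, by rw [shrinkBlock, if_neg (lt_irrefl _)]⟩
  · rintro ⟨X, m, Y, hlt | ⟨rfl, hcut⟩, rfl, rfl⟩
    · exact Or.inl ⟨X, _, Y, if_pos hlt, by rw [Nat.sub_add_cancel hlt.le]⟩
    · exact Or.inr ⟨X, Y, hcut, if_neg (lt_irrefl _), rfl⟩

/-- Corollary 4.4: every circular composition other than `(1,1)` has a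
unique parent among circular compositions, with respect to the child rules. -/
theorem uniqueParent (l : List ℕ) (hl : IsComposition l) (hc : IsCircular l)
    (hne : l ≠ [1, 1]) :
    ∃! μ : List ℕ, IsComposition μ ∧ IsCircular μ ∧ IsChild μ l := by
  obtain ⟨X, m, Y, hcentral, rfl⟩ := hc.exists_isCentral hl.2 hne
  have hpos := pos_of_mem_shrinkBlock hl.2
  have hcirc := isCircular_shrinkBlock hc hcentral.absShift_le
  have hnil : shrinkBlock X m Y ≠ [] := fun h => hcirc.sum_pos.ne' (by rw [h, List.sum_nil])
  refine ⟨shrinkBlock X m Y, ⟨⟨hnil, hpos⟩, hcirc, ?_⟩, ?_⟩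
  · exact (isChild_iff_exists_isCentral hpos).2 ⟨X, m, Y, hcentral, rfl, rfl⟩
  · rintro μ ⟨hμ, -, hchild⟩
    obtain ⟨X', m', Y', hcentral', heq, rfl⟩ := (isChild_iff_exists_isCentral hμ.2).1 hchild
    obtain ⟨rfl, rfl, rfl⟩ := hcentral.unique hcentral' heq hl.2
    rfl
end

section
/- Let (λ_1, λ_2, λ_3) be a composition of n = λ_1 + λ_2 + λ_3 and set d = gcd(λ_1 + λ_2, λ_2 + λ_3). Then for every x ∈ {1,…,n}, the orbit of x under the permutation T_{(λ_1,λ_2,λ_3)} is exactly the set {x + kd : k ∈ ℤ, 1 ≤ x + kd ≤ n}, i.e. the set of all elements of {1,…,n} congruent to x modulo d. -/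
/-- `T` restricts to the first-return map of `R` on `S`: it sends each point of `S` to the next
point of its trajectory under `R` that lies in `S`, which is required to exist. Nothing is said
about `T` outside `S`. -/
def IsFirstReturnMap_s18 {α : Type*} (R T : α → α) (S : Set α) : Prop :=
  ∀ x ∈ S, ∃ m, IsLeast {m | 0 < m ∧ R^[m] x ∈ S} m ∧ R^[m] x = T x

section ReturnTime

variable {α : Type*} {R : α → α} {S : Set α} {x : α}

lemma isLeast_returnTimes_one (h : R x ∈ S) : IsLeast {m | 0 < m ∧ R^[m] x ∈ S} 1 :=
  ⟨⟨Nat.one_pos, h⟩, fun _ hm ↦ hm.1⟩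

lemma isLeast_returnTimes_two (h₁ : R x ∉ S) (h₂ : R (R x) ∈ S) :
    IsLeast {m | 0 < m ∧ R^[m] x ∈ S} 2 := by
  refine ⟨⟨Nat.two_pos, h₂⟩, fun m ⟨hm_pos, hm⟩ ↦ ?_⟩
  have hm_ne : m ≠ 1 := by
    rintro rfl
    exact h₁ hm
  omega

end ReturnTime

namespace IsFirstReturnMap_s18

variable {α : Type*} {R T : α → α} {S : Set α} {x y : α}

lemma mapsTo (h : IsFirstReturnMap_s18 R T S) : Set.MapsTo T S S := by
  intro x hx
  obtain ⟨m, hm, hT⟩ := h x hx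
  exact hT ▸ hm.1.2

lemma exists_iterate_eq_iterate (h : IsFirstReturnMap_s18 R T S) (hx : x ∈ S) (j : ℕ) :
    ∃ k, R^[k] x = T^[j] x := by
  induction j with
  | zero => exact ⟨0, rfl⟩
  | succ j ih =>
    obtain ⟨k, hk⟩ := ih
    obtain ⟨m, -, hm⟩ := h _ (h.mapsTo.iterate j hx)
    exact ⟨m + k, by rw [Function.iterate_add_apply, hk, hm, Function.iterate_succ_apply']⟩

lemma exists_iterate_eq_of_mem (h : IsFirstReturnMap_s18 R T S) (hx : x ∈ S) {k : ℕ}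
    (hk : R^[k] x ∈ S) : ∃ j, T^[j] x = R^[k] x := by
  induction k using Nat.strong_induction_on generalizing x with
  | _ k ih =>
    rcases k.eq_zero_or_pos with rfl | hk_pos
    · exact ⟨0, rfl⟩
    · obtain ⟨m, ⟨⟨hm_pos, -⟩, hm_least⟩, hT⟩ := h x hx
      have hmk : m ≤ k := hm_least ⟨hk_pos, hk⟩
      have hRk : R^[k - m] (T x) = R^[k] x := by
        rw [← hT, ← Function.iterate_add_apply, Nat.sub_add_cancel hmk]
      obtain ⟨j, hj⟩ := ih (k - m) (by omega) (h.mapsTo hx) (hRk ▸ hk)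
      exact ⟨j + 1, hj.trans hRk⟩

theorem exists_iterate_eq_iff (h : IsFirstReturnMap_s18 R T S) (hx : x ∈ S) :
    (∃ j, T^[j] x = y) ↔ y ∈ S ∧ ∃ k, R^[k] x = y := by
  constructor
  · rintro ⟨j, rfl⟩
    exact ⟨h.mapsTo.iterate j hx, h.exists_iterate_eq_iterate hx j⟩
  · rintro ⟨hy, k, rfl⟩
    exact h.exists_iterate_eq_of_mem hx hy

end IsFirstReturnMap_s18

lemma exists_add_natCast_mul_modEq_iff {n : ℤ} (hn : 0 < n) (q x y : ℤ) :
    (∃ k : ℕ, x + k * q ≡ y [ZMOD n]) ↔ (Int.gcd n q : ℤ) ∣ y - x := by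
  rw [Int.coe_gcd, gcd_dvd_iff_exists]
  constructor
  · rintro ⟨k, hk⟩
    obtain ⟨u, hu⟩ := hk.dvd
    exact ⟨u, k, by linear_combination hu⟩
  · rintro ⟨u, v, huv⟩
    obtain ⟨k, -, hk⟩ := Int.existsUnique_equiv_nat v hn
    refine ⟨k, ((hk.mul_right q).add_left x).trans (Int.modEq_iff_dvd.mpr ⟨u, ?_⟩)⟩
    linear_combination huv

lemma eq_of_modEq_of_abs_sub_lt {n x y : ℤ} (h : x ≡ y [ZMOD n]) (hlt : |y - x| < n) : x = y :=
  (sub_eq_zero.mp (Int.eq_zero_of_abs_lt_dvd h.dvd hlt)).symm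

lemma Texch_eq_add_transParam {l : List ℕ} {i : ℕ} (hi : i < l.length) {x : ℤ}
    (hx : x ∈ Set.Ioc ((l.take i).sum : ℤ) (l.take (i + 1)).sum) :
    Texch l x = x + transParam l i := by
  obtain ⟨hlt, hle⟩ := hx
  rw [Texch, Finset.sum_eq_single_of_mem i (Finset.mem_range.mpr hi), if_pos ⟨hlt, hle⟩]
  rintro j - hji
  refine if_neg fun ⟨hltj, hlej⟩ ↦ ?_
  rcases hji.lt_or_gt with hj | hj
  · have hsum : (l.take (j + 1)).sum ≤ (l.take i).sum := l.monotone_sum_take hj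
    exact (hlej.trans (mod_cast hsum)).not_gt hlt
  · have hsum : (l.take (i + 1)).sum ≤ (l.take j).sum := l.monotone_sum_take hj
    exact (hle.trans (mod_cast hsum)).not_gt hltj

section Pair

variable {p q : ℕ} {x : ℤ}

lemma Texch_pair_left (hx : x ∈ Set.Ioc 0 (p : ℤ)) : Texch [p, q] x = x + q := by
  rw [Texch_eq_add_transParam (i := 0) (by simp) (by simpa using hx)]
  simp [transParam]

lemma Texch_pair_right (hx : x ∈ Set.Ioc (p : ℤ) (p + q)) : Texch [p, q] x = x - p := by
  rw [Texch_eq_add_transParam (i := 1) (by simp) (by simpa using hx)]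
  simp [transParam, sub_eq_add_neg]

lemma Texch_pair_mem_Icc_and_modEq (hx : x ∈ Set.Icc 1 (p + q : ℤ)) :
    Texch [p, q] x ∈ Set.Icc 1 (p + q : ℤ) ∧ Texch [p, q] x ≡ x + q [ZMOD p + q] := by
  obtain ⟨hx1, hxn⟩ := hx
  rcases le_or_gt x p with hxp | hxp
  · rw [Texch_pair_left ⟨by omega, hxp⟩]
    exact ⟨⟨by omega, by omega⟩, rfl⟩
  · rw [Texch_pair_right ⟨hxp, hxn⟩]
    exact ⟨⟨by omega, by omega⟩, Int.modEq_iff_dvd.mpr ⟨1, by ring⟩⟩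

lemma iterate_Texch_pair_mem_Icc_and_modEq (hx : x ∈ Set.Icc 1 (p + q : ℤ)) (k : ℕ) :
    (Texch [p, q])^[k] x ∈ Set.Icc 1 (p + q : ℤ) ∧
      (Texch [p, q])^[k] x ≡ x + k * q [ZMOD p + q] := by
  induction k with
  | zero => simpa using hx
  | succ k ih =>
    obtain ⟨hmem, hmod⟩ := ih
    obtain ⟨hmem', hmod'⟩ := Texch_pair_mem_Icc_and_modEq hmem
    rw [Function.iterate_succ_apply']
    refine ⟨hmem', hmod'.trans ?_⟩
    convert hmod.add_right (q : ℤ) using 1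
    push_cast
    ring

theorem orbit_pair (hx : x ∈ Set.Icc 1 (p + q : ℤ)) :
    orbit [p, q] x = {y ∈ Set.Icc 1 (p + q : ℤ) | (Nat.gcd p q : ℤ) ∣ y - x} := by
  have hn : (0 : ℤ) < p + q := by linarith [hx.1, hx.2]
  have hgcd : Int.gcd (p + q) q = Nat.gcd p q := by simp
  ext y
  simp only [orbit, Set.mem_ofPred_eq]
  rw [← hgcd, ← exists_add_natCast_mul_modEq_iff hn]
  constructor
  · rintro ⟨k, rfl⟩
    obtain ⟨hmem, hmod⟩ := iterate_Texch_pair_mem_Icc_and_modEq hx k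
    exact ⟨hmem, k, hmod.symm⟩
  · rintro ⟨hy, k, hk⟩
    obtain ⟨hmem, hmod⟩ := iterate_Texch_pair_mem_Icc_and_modEq hx k
    have hlt : |y - (Texch [p, q])^[k] x| < p + q :=
      abs_lt.mpr ⟨by linarith [hmem.2, hy.1], by linarith [hmem.1, hy.2]⟩
    exact ⟨k, eq_of_modEq_of_abs_sub_lt (hmod.trans hk) hlt⟩

end Pair

section Triple

variable {a b c : ℕ} {x : ℤ}

lemma Texch_triple_left (hx : x ∈ Set.Ioc 0 (a : ℤ)) : Texch [a, b, c] x = x + (b + c) := by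
  rw [Texch_eq_add_transParam (i := 0) (by simp) (by simpa using hx)]
  simp [transParam]

lemma Texch_triple_middle (hx : x ∈ Set.Ioc (a : ℤ) (a + b)) :
    Texch [a, b, c] x = x + (c - a) := by
  rw [Texch_eq_add_transParam (i := 1) (by simp) (by simpa using hx)]
  simp [transParam]

lemma Texch_triple_right (hx : x ∈ Set.Ioc (a + b : ℤ) (a + b + c)) :
    Texch [a, b, c] x = x - (a + b) := by
  rw [Texch_eq_add_transParam (i := 2) (by simp) (by simpa [← add_assoc] using hx)]
  simp [transParam, sub_eq_add_neg]

theorem isFirstReturnMap_Texch_triple (a b c : ℕ) :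
    IsFirstReturnMap_s18 (Texch [a + b, b + c]) (Texch [a, b, c]) (Set.Icc 1 (a + b + c : ℤ)) := by
  have hR_left {z : ℤ} (hz : z ∈ Set.Ioc 0 (a + b : ℤ)) :
      Texch [a + b, b + c] z = z + (b + c) := by
    exact_mod_cast Texch_pair_left (p := a + b) (q := b + c) (mod_cast hz)
  have hR_right {z : ℤ} (hz : z ∈ Set.Ioc (a + b : ℤ) (a + b + (b + c))) :
      Texch [a + b, b + c] z = z - (a + b) := by
    exact_mod_cast Texch_pair_right (p := a + b) (q := b + c) (mod_cast hz)
  rintro x ⟨hx1, hxn⟩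
  rcases le_or_gt x a with hxa | hxa
  · have hR := hR_left (z := x) ⟨by omega, by omega⟩
    refine ⟨1, isLeast_returnTimes_one ?_, hR.trans (Texch_triple_left ⟨by omega, hxa⟩).symm⟩
    rw [hR]
    constructor <;> omega
  rcases le_or_gt x (a + b) with hxab | hxab
  · have hR := hR_left (z := x) ⟨by omega, hxab⟩
    have hR₂ := hR_right (z := x + (b + c)) ⟨by omega, by omega⟩
    refine ⟨2, isLeast_returnTimes_two ?_ ?_, ?_⟩
    · rw [hR, Set.mem_Icc]
      omega
    · rw [hR, hR₂]
      constructor <;> omega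
    · calc
        (Texch [a + b, b + c])^[2] x = x + (b + c) - (a + b) := by
          rw [Function.iterate_succ_apply, Function.iterate_one, hR, hR₂]
        _ = x + (c - a) := by ring
        _ = Texch [a, b, c] x := (Texch_triple_middle ⟨hxa, hxab⟩).symm
  · have hR := hR_right (z := x) ⟨hxab, by omega⟩
    refine ⟨1, isLeast_returnTimes_one ?_, hR.trans (Texch_triple_right ⟨hxab, hxn⟩).symm⟩
    rw [hR]
    constructor <;> omega

end Triple

/-- Theorem 5.3: for a composition `(λ₁,λ₂,λ₃)` of `n` and
`d = gcd(λ₁+λ₂, λ₂+λ₃)`, the orbit of any `x ∈ {1,…,n}` under `T_{(λ₁,λ₂,λ₃)}` is the set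
of elements of `{1,…,n}` congruent to `x` modulo `d`. -/
theorem orbit_triple (a b c : ℕ) (ha : 0 < a) (hb : 0 < b) (hc : 0 < c)
    (x : ℤ) (hx1 : 1 ≤ x) (hxn : x ≤ ((a + b + c : ℕ) : ℤ)) :
    orbit [a, b, c] x =
      {y : ℤ | 1 ≤ y ∧ y ≤ ((a + b + c : ℕ) : ℤ) ∧
        ((Nat.gcd (a + b) (b + c) : ℤ)) ∣ (y - x)} := by
  push_cast at hxn ⊢
  have hx : x ∈ Set.Icc 1 (a + b + c : ℤ) := ⟨hx1, hxn⟩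
  have hx' : x ∈ Set.Icc 1 ((a + b : ℕ) + (b + c : ℕ) : ℤ) := ⟨hx1, by omega⟩
  have htrace : orbit [a, b, c] x = Set.Icc 1 (a + b + c : ℤ) ∩ orbit [a + b, b + c] x :=
    Set.ext fun _ ↦ (isFirstReturnMap_Texch_triple a b c).exists_iterate_eq_iff hx
  rw [htrace, orbit_pair hx']
  ext y
  simp only [Set.mem_inter_iff, Set.mem_ofPred_eq, Set.mem_Icc]
  constructor
  · rintro ⟨⟨hy1, hyn⟩, -, hd⟩
    exact ⟨hy1, hyn, hd⟩
  · rintro ⟨hy1, hyn, hd⟩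
    exact ⟨⟨hy1, hyn⟩, ⟨hy1, by omega⟩, hd⟩
end
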